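/- Let G be a finite tree, let S be a nonempty subset of its vertices, and let T be the minimal subtree of G spanning S (the union over all pairs of vertices of S of the unique G-path between them). Let K be any vertex set with S ⊆ K ⊆ V(T) that contains every vertex of T whose degree in T is at least 3. Define the graph H on vertex set K by: u is adjacent to w in H if and only if u ≠ w and every internal vertex of the unique path in T between u and w lies outside K. Then H is a tree. In particular, keeping, in addition to S, the vertices of degree at least 3 of T suffices to ensure a radial (tree) structure among the kept nodes after reducing all other vertices. -/

import Mathlib

/-!
Cutting a path of `T` at its vertices in `K` yields a walk in the reduction, which is therefore
connected. If two paths of `T` with no internal vertex in `K` traverse an edge in the same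
direction, they can only part ways at a vertex of degree at least `3`, hence in `K`, where both
stop; so paths realizing different edges of the reduction do not share their first edges. Deleting
from `T` the first edge of the path realizing an edge `e` of the reduction thus leaves every other
edge of the reduction realized, and `e` is a bridge because every edge of `T` is one.
-/

open SimpleGraph

section

variable {V : Type*} {G : SimpleGraph V} {K : Set V}

/-- A path whose internal vertices lie outside `K`. The two ends may or may not lie in `K`, and the
path may be trivial. -/
structure IsKronPath (K : Set V) {u w : V} (p : G.Walk u w) : Prop where
  isPath : p.IsPath
  eq_or_eq_of_mem : ∀ x ∈ p.support, x ∈ K → x = u ∨ x = w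

namespace IsKronPath

variable {u v w z : V}

theorem reverse {p : G.Walk u w} (hp : IsKronPath K p) : IsKronPath K p.reverse where
  isPath := hp.isPath.reverse
  eq_or_eq_of_mem x hx hxK := (hp.eq_or_eq_of_mem x (by simpa using hx) hxK).symm

theorem of_cons {h : G.Adj u v} {p : G.Walk v w} (hp : IsKronPath K (.cons h p)) :
    IsKronPath K p where
  isPath := hp.isPath.of_cons
  eq_or_eq_of_mem x hx hxK := by
    have hxu : x ≠ u := fun hxu ↦ ((Walk.cons_isPath_iff h p).mp hp.isPath).2 (hxu ▸ hx)
    exact .inr ((hp.eq_or_eq_of_mem x (by simp [hx]) hxK).resolve_left hxu)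

theorem snd_eq_of_mem {h : G.Adj u v} {p : G.Walk v w} (hp : IsKronPath K (.cons h p))
    (hv : v ∈ K) : v = w :=
  (hp.eq_or_eq_of_mem v (by simp) hv).resolve_left h.ne'

theorem end_eq_of_cons (hK : ∀ x, 3 ≤ (G.neighborSet x).encard → x ∈ K)
    {h : G.Adj u v} {p : G.Walk v w} {q : G.Walk v z}
    (hp : IsKronPath K (.cons h p)) (hq : IsKronPath K (.cons h q))
    (hw : w ∈ K) (hz : z ∈ K) : w = z := by
  induction p generalizing u with
  | nil => exact hq.snd_eq_of_mem hw
  | @cons v b w hvb p ih =>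
    cases q with
    | nil => exact (hp.snd_eq_of_mem hz).symm
    | @cons _ c _ hvc q =>
      have hvK : v ∉ K := fun hv ↦ by
        obtain rfl := hp.snd_eq_of_mem hv
        simpa using hp.of_cons.isPath
      have hub : u ≠ b := by
        rintro rfl
        simpa using hp.isPath
      have huc : u ≠ c := by
        rintro rfl
        simpa using hq.isPath
      obtain rfl : b = c := by
        by_contra hbc
        refine hvK (hK v ?_)
        calc
          3 = ({u, b, c} : Set V).encard :=
            (Set.encard_eq_three.mpr ⟨u, b, c, hub, huc, hbc, rfl⟩).symm
          _ ≤ (G.neighborSet v).encard := Set.encard_le_encard <| by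
            rintro x (rfl | rfl | rfl)
            exacts [h.symm, hvb, hvc]
      exact ih hp.of_cons hq.of_cons hw

theorem end_eq_of_mem_edges (hK : ∀ x, 3 ≤ (G.neighborSet x).encard → x ∈ K)
    {h : G.Adj u v} {p : G.Walk v w} {q : G.Walk u z}
    (hp : IsKronPath K (.cons h p)) (hq : IsKronPath K q)
    (hw : w ∈ K) (hz : z ∈ K) (he : s(u, v) ∈ q.edges) : w = z := by
  have hsnd : v = q.snd := hq.isPath.eq_snd_of_mem_edges he
  cases q with
  | nil => simp at he
  | @cons _ c _ _ q =>
    obtain rfl : v = c := by simpa using hsnd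
    exact hp.end_eq_of_cons hK hq hw hz

end IsKronPath

/-- The combinatorial Kron reduction of `G` onto `K`: the adjacency structure left on `K` after
eliminating all other vertices. -/
def kronReduction (G : SimpleGraph V) (K : Set V) : SimpleGraph K where
  Adj u w := u ≠ w ∧ ∃ p : G.Walk u w, IsKronPath K p
  symm := ⟨fun _ _ ⟨hne, p, hp⟩ ↦ ⟨hne.symm, p.reverse, hp.reverse⟩⟩
  loopless := ⟨fun _ h ↦ h.1 rfl⟩

namespace kronReduction

theorem reachable_of_isPath {u w : K} {p : G.Walk u w} (hp : p.IsPath) :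
    (kronReduction G K).Reachable u w := by
  classical
  induction hn : p.length using Nat.strong_induction_on generalizing u w with
  | _ n ih =>
    subst hn
    by_cases hint : ∃ x : K, ↑x ∈ p.support ∧ x ≠ u ∧ x ≠ w
    · obtain ⟨x, hx, hxu, hxw⟩ := hint
      have hreach_ux := ih _ (Walk.length_takeUntil_lt_length hx (Subtype.coe_ne_coe.mpr hxw))
        (hp.takeUntil hx) rfl
      have hreach_xw := ih _ (Walk.length_dropUntil_lt_length hx (Subtype.coe_ne_coe.mpr hxu))
        (hp.dropUntil hx) rfl
      exact hreach_ux.trans hreach_xw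
    · obtain rfl | huw := eq_or_ne u w
      · rfl
      · have hadj : (kronReduction G K).Adj u w := by
          refine ⟨huw, p, hp, fun x hx hxK ↦ ?_⟩
          by_contra! hne
          exact hint ⟨⟨x, hxK⟩, hx, by simpa [Subtype.ext_iff] using hne⟩
        exact hadj.reachable

theorem reachable_iff {u w : K} : (kronReduction G K).Reachable u w ↔ G.Reachable u w := by
  constructor
  · rintro ⟨p⟩
    induction p with
    | nil => rfl
    | cons h _ ih =>
      obtain ⟨-, q, -⟩ := h
      exact q.reachable.trans ih
  · intro h
    obtain ⟨p, hp⟩ := h.exists_isPath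
    exact reachable_of_isPath hp

theorem deleteEdges_le (hK : ∀ x, 3 ≤ (G.neighborSet x).encard → x ∈ K)
    {u w : K} {v : V} {h : G.Adj u v} {p : G.Walk v w} (hp : IsKronPath K (.cons h p)) :
    (kronReduction G K).deleteEdges {s(u, w)} ≤ kronReduction (G.deleteEdges {s(↑u, v)}) K := by
  intro x y hxy
  rw [deleteEdges_adj, Set.mem_singleton_iff] at hxy
  obtain ⟨⟨hne, q, hq⟩, hxy⟩ := hxy
  have he : s(↑u, v) ∉ q.edges := fun he ↦ hxy <| by
    obtain hux | huy := hq.eq_or_eq_of_mem u (q.fst_mem_support_of_mem_edges he) u.2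
    · obtain rfl := Subtype.ext hux
      rw [Subtype.ext (hp.end_eq_of_mem_edges hK hq w.2 y.2 he)]
    · obtain rfl := Subtype.ext huy
      rw [Subtype.ext (hp.end_eq_of_mem_edges hK hq.reverse w.2 x.2 (by simpa using he)),
        Sym2.eq_swap]
  exact ⟨hne, q.toDeleteEdge _ he, hq.isPath.toDeleteEdges _ _ _,
    by simpa using hq.eq_or_eq_of_mem⟩

theorem isAcyclic (hG : G.IsAcyclic) (hK : ∀ x, 3 ≤ (G.neighborSet x).encard → x ∈ K) :
    (kronReduction G K).IsAcyclic := by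
  rw [isAcyclic_iff_forall_adj_isBridge]
  rintro ⟨u, _⟩ ⟨w, _⟩ ⟨hne, p, hp⟩
  cases p with
  | nil => exact absurd rfl hne
  | @cons _ v _ huv p =>
    rw [isBridge_iff]
    intro hreach
    have huw : (G.deleteEdges {s(u, v)}).Reachable u w :=
      reachable_iff.mp (hreach.mono (deleteEdges_le hK hp))
    have hvw : (G.deleteEdges {s(u, v)}).Reachable v w :=
      reachable_deleteEdges_iff_exists_walk.mpr ⟨p, fun he ↦
        ((Walk.cons_isPath_iff huv p).mp hp.isPath).2 (p.fst_mem_support_of_mem_edges he)⟩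
    exact isBridge_iff.mp (isAcyclic_iff_forall_adj_isBridge.mp hG huv) (huw.trans hvw.symm)

theorem isTree (hG : G.IsTree) (hne : K.Nonempty)
    (hK : ∀ x, 3 ≤ (G.neighborSet x).encard → x ∈ K) : (kronReduction G K).IsTree where
  connected :=
    { preconnected := fun _ _ ↦ reachable_iff.mpr (hG.connected.preconnected _ _)
      nonempty := hne.to_subtype }
  isAcyclic := isAcyclic hG.isAcyclic hK

theorem induce_adj {A : Set V} {u w : ((↑) ⁻¹' K : Set A)} :
    (kronReduction (G.induce A) ((↑) ⁻¹' K)).Adj u w ↔ u ≠ w ∧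
      ∃ p : G.Walk u.1 w.1, p.IsPath ∧ (∀ x ∈ p.support, x ∈ A) ∧
        ∀ x ∈ p.support, x ≠ u.1 → x ≠ w.1 → x ∉ K := by
  refine and_congr_right fun _ ↦ ⟨?_, ?_⟩
  · rintro ⟨p, hp⟩
    have mem_support {x : V} (hx : x ∈ (p.map (Embedding.induce A).toHom).support) :
        ∃ y ∈ p.support, ↑y = x := by
      rw [Walk.support_map] at hx
      exact List.mem_map.mp hx
    refine ⟨p.map (Embedding.induce A).toHom, hp.isPath.map Subtype.val_injective,
      fun x hx ↦ ?_, fun x hx hxu hxw hxK ↦ ?_⟩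
    · obtain ⟨y, -, rfl⟩ := mem_support hx
      exact y.2
    · obtain ⟨y, hy, rfl⟩ := mem_support hx
      obtain rfl | rfl := hp.eq_or_eq_of_mem y hy hxK
      exacts [hxu rfl, hxw rfl]
  · rintro ⟨p, hp, hpA, hpK⟩
    refine ⟨p.induce A hpA, .of_map (f := (Embedding.induce A).toHom) ?_, fun x hx hxK ↦ ?_⟩
    · rwa [Walk.map_induce]
    · rw [Walk.support_induce, List.mem_attachWith] at hx
      by_contra! hne
      exact hpK x hx (Subtype.coe_ne_coe.mpr hne.1) (Subtype.coe_ne_coe.mpr hne.2) hxK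

end kronReduction

/-- The vertex set of the minimal subtree spanning `S` when `G` is a tree: all vertices on paths
between vertices of `S`. -/
def pathHull (G : SimpleGraph V) (S : Set V) : Set V :=
  {x | ∃ s ∈ S, ∃ t ∈ S, ∃ p : G.Walk s t, p.IsPath ∧ x ∈ p.support}

theorem connected_induce_pathHull (hG : G.Connected) {S : Set V} (hS : S.Nonempty) :
    (G.induce (pathHull G S)).Connected := by
  obtain ⟨r, hr⟩ := hS
  have support_subset {s t : V} (hs : s ∈ S) (ht : t ∈ S) {p : G.Walk s t} (hp : p.IsPath) :
      {x | x ∈ p.support} ⊆ pathHull G S := fun x hx ↦ ⟨s, hs, t, ht, p, hp, hx⟩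
  refine G.induce_connected_of_patches r ⟨r, hr, r, hr, .nil, .nil, by simp⟩ ?_
  rintro x ⟨s, hs, t, ht, p, hp, hx⟩
  obtain ⟨q, hq⟩ := hG.exists_isPath r s
  have hunion := induce_union_connected q.connected_induce_support.preconnected
    p.connected_induce_support.preconnected ⟨s, q.end_mem_support, p.start_mem_support⟩
  exact ⟨_, Set.union_subset (support_subset hr hs hq) (support_subset hs ht hp),
    .inl q.start_mem_support, .inr hx, hunion.preconnected _ _⟩

theorem radialization_sufficiency_general {A : Set V} (hA : (G.induce A).IsTree)
    (hne : K.Nonempty) (hKA : K ⊆ A)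
    (hdeg : ∀ x ∈ A, 3 ≤ (A ∩ G.neighborSet x).encard → x ∈ K)
    {H : SimpleGraph K} (hH : ∀ u w : K, H.Adj u w ↔ u ≠ w ∧
      ∃ p : G.Walk u.1 w.1, p.IsPath ∧ (∀ x ∈ p.support, x ∈ A) ∧
        (∀ x ∈ p.support, x ≠ u.1 → x ≠ w.1 → x ∉ K)) :
    H.IsTree := by
  have hbranch (x : A) (hx : 3 ≤ ((G.induce A).neighborSet x).encard) :
      x ∈ ((↑) ⁻¹' K : Set A) := by
    have himage : (↑) '' (G.induce A).neighborSet x = A ∩ G.neighborSet x := by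
      ext y
      simp [and_comm]
    exact hdeg x x.2 (by rwa [← himage, Subtype.val_injective.encard_image])
  let e : kronReduction (G.induce A) ((↑) ⁻¹' K) ≃g H :=
    { toEquiv := Equiv.subtypeSubtypeEquivSubtype @hKA
      map_rel_iff' := fun {u w} ↦ by
        rw [kronReduction.induce_adj, hH, (Equiv.injective _).ne_iff]
        rfl }
  obtain ⟨k, hk⟩ := hne
  exact e.isTree_iff.mp (kronReduction.isTree hA ⟨⟨k, hKA hk⟩, hk⟩ hbranch)

end

/-- **Sufficiency direction of the radialization theorem.**
Let `G` be a finite tree, `S` a nonempty vertex set, and `VT` the vertex set of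
the minimal subtree `T` of `G` spanning `S` (the union over all pairs of
vertices of `S` of the unique `G`-path between them); being a subtree of the
tree `G`, `T` is the subgraph of `G` induced on `VT`, and the degree in `T` of
a vertex `x` is `(VT ∩ G.neighborSet x).ncard`. Let `K` be any vertex set with
`S ⊆ K ⊆ VT` containing every vertex of `T` of degree at least 3 in `T`.
Then the Kron reduction `H` of `T` onto `K` — two kept vertices being
adjacent iff they are distinct and every internal vertex of the unique path of
`T` between them lies outside `K` — is a tree. -/
theorem radialization_sufficiency {V : Type} [Fintype V] [DecidableEq V]
    (G : SimpleGraph V) (hG : G.IsTree)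
    (S : Set V) (hS : S.Nonempty)
    (VT : Set V)
    (hVT : VT = {x | ∃ s ∈ S, ∃ t ∈ S, ∃ p : G.Walk s t, p.IsPath ∧ x ∈ p.support})
    (K : Set V) (hSK : S ⊆ K) (hKVT : K ⊆ VT)
    (hdeg : ∀ x ∈ VT, 3 ≤ (VT ∩ G.neighborSet x).ncard → x ∈ K)
    (H : SimpleGraph K)
    (hH : ∀ u w : K, H.Adj u w ↔ u ≠ w ∧
      ∃ p : G.Walk u.1 w.1, p.IsPath ∧ (∀ x ∈ p.support, x ∈ VT) ∧
        (∀ x ∈ p.support, x ≠ u.1 → x ≠ w.1 → x ∉ K)) :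
    H.IsTree := by
  subst hVT
  exact radialization_sufficiency_general
    ⟨connected_induce_pathHull hG.connected hS, hG.isAcyclic.induce _⟩ (hS.mono hSK) hKVT
    (fun x hx h ↦ hdeg x hx (by rwa [← (Set.toFinite _).cast_ncard_eq, Nat.ofNat_le_cast] at h))
    hH
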